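/- Let R be a ring and let E^{p,q} be R-modules indexed by pairs of integers (p,q), such that for each p the modules E^{p,q} vanish for q outside a fixed finite range. Let u = (u^{p,q} : E^{p,q} → E^{p,q+2}) be a family of R-linear maps and n an integer, and assume that for every p and every i ≥ 0 the i-fold composite u^i : E^{p,n-i} → E^{p,n+i} is an isomorphism. Let r ≥ 2 be an integer and let d = (d^{p,q} : E^{p,q} → E^{p+r,q-r+1}) be a family of R-linear maps commuting with u, i.e. u^{p+r,q-r+1} ∘ d^{p,q} = d^{p,q+2} ∘ u^{p,q} for all p, q. Then d^{p,q} = 0 for all p, q. -/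

import Mathlib

/-!
The vanishing-of-differentials argument in the proof of Theorem 3.2 of the paper:
differentials `d_r` (`r ≥ 2`) of a spectral sequence commuting with a Lefschetz operator
`u` (which is an isomorphism `u^i : E^{p,n-i} ≅ E^{p,n+i}` in the second index) vanish.
-/

variable {R : Type*} [Ring R]

/-- Transport of a module along an equality of indices. -/
def castHom (A : ℤ → Type*) [∀ j, AddCommGroup (A j)] [∀ j, Module R (A j)]
    {j j' : ℤ} (h : j = j') : A j →ₗ[R] A j' := by
  subst h; exact LinearMap.id

/-- The `i`-fold composite `u^i : E p q → E p (q + 2*i)` of the maps `u` in the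
second index. -/
def upow {E : ℤ → ℤ → Type*} [∀ p q, AddCommGroup (E p q)] [∀ p q, Module R (E p q)]
    (u : ∀ p q, E p q →ₗ[R] E p (q + 2)) (p : ℤ) :
    (i : ℕ) → (q : ℤ) → (E p q →ₗ[R] E p (q + 2 * i))
  | 0, q => castHom (E p) (by push_cast; ring)
  | (i + 1), q => (castHom (E p) (by push_cast; ring)).comp ((upow u p i (q + 2)).comp (u p q))

/-!
Reindexing the target of the differential makes it a degree-preserving map `D` from a graded module
with Lefschetz operator `U` centred at `n` to one with Lefschetz operator `V` centred at the
strictly larger `m = n + r - 1`. Let `x` have degree `n - i`. Surjectivity of `U ^ (i + 2)` gives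
`U ^ (i + 1) x = U ^ (i + 2) y` with `y` of degree `n - i - 2`, hence
`V ^ (i + 1) (D x) = V ^ (i + 2) (D y)`, which vanishes by induction on the degree. As
`i + 1 ≤ m - (n - i)`, the map `V ^ (i + 1)` is injective in degree `n - i`, so `D x = 0`.
Degrees above `n` are reached from those below by powers of `U`.
-/

section InternalGrading

variable {S M N : Type*} [Semiring S] [AddCommMonoid M] [Module S M] [AddCommMonoid N] [Module S N]
  {A : ℤ → Submodule S M} {B : ℤ → Submodule S N}
  {U : Module.End S M} {V : Module.End S N} {D : M →ₗ[S] N} {n m : ℤ}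

theorem pow_apply_mem_add_two_mul (hU : ∀ q, ∀ x ∈ A q, U x ∈ A (q + 2)) (i : ℕ) {q : ℤ}
    {x : M} (hx : x ∈ A q) : (U ^ i) x ∈ A (q + 2 * i) := by
  induction i with
  | zero => simpa using hx
  | succ i ih =>
    have hdeg : q + 2 * ((i + 1 : ℕ) : ℤ) = q + 2 * i + 2 := by push_cast; ring
    rw [pow_succ', Module.End.mul_apply, hdeg]
    exact hU _ _ ih

theorem map_pow_apply_of_comm (hDU : D ∘ₗ U = V ∘ₗ D) (i : ℕ) (x : M) :
    D ((U ^ i) x) = (V ^ i) (D x) :=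
  (LinearMap.congr_fun (Module.End.commute_pow_left_of_commute hDU.symm i) x).symm

theorem le_ker_of_le_ker_sub_two (hU : ∀ q, ∀ x ∈ A q, U x ∈ A (q + 2))
    (hsurj : ∀ i : ℕ, Set.SurjOn (U ^ i) (A (n - i)) (A (n + i)))
    (hinj : ∀ i : ℕ, Disjoint (B (m - i)) (LinearMap.ker (V ^ i)))
    (hD : ∀ q, ∀ x ∈ A q, D x ∈ B q) (hDU : D ∘ₗ U = V ∘ₗ D) (hnm : n < m)
    {q : ℤ} (hq : q ≤ n) (hprev : A (q - 2) ≤ LinearMap.ker D) :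
    A q ≤ LinearMap.ker D := by
  intro x hx
  obtain ⟨i, rfl⟩ : ∃ i : ℕ, q = n - i := ⟨(n - q).toNat, by lia⟩
  obtain ⟨k, hk⟩ : ∃ k : ℕ, m = n + (k + 1) := ⟨(m - n - 1).toNat, by lia⟩
  have hUx : (U ^ (i + 1)) x ∈ A (n + (i + 2 : ℕ)) := by
    have hdeg : n + ((i + 2 : ℕ) : ℤ) = n - i + 2 * (i + 1 : ℕ) := by push_cast; ring
    rw [hdeg]
    exact pow_apply_mem_add_two_mul hU (i + 1) hx
  obtain ⟨y, hy, hyx⟩ := hsurj (i + 2) hUx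
  have hDy : D y = 0 := by
    have hdeg : n - ((i + 2 : ℕ) : ℤ) = n - i - 2 := by push_cast; ring
    rw [hdeg] at hy
    exact hprev hy
  have hVDx : (V ^ (i + 1)) (D x) = 0 := by
    rw [← map_pow_apply_of_comm hDU, ← hyx, map_pow_apply_of_comm hDU, hDy, map_zero]
  have hDx : D x ∈ B (m - (k + (i + 1) : ℕ)) := by
    have hdeg : m - ((k + (i + 1) : ℕ) : ℤ) = n - i := by push_cast; linarith
    rw [hdeg]
    exact hD _ x hx
  refine Submodule.disjoint_def.mp (hinj (k + (i + 1))) (D x) hDx ?_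
  rw [LinearMap.mem_ker, pow_add, Module.End.mul_apply, hVDx, map_zero]

theorem le_ker_of_lt_center (hU : ∀ q, ∀ x ∈ A q, U x ∈ A (q + 2))
    (hsurj : ∀ i : ℕ, Set.SurjOn (U ^ i) (A (n - i)) (A (n + i)))
    (hinj : ∀ i : ℕ, Disjoint (B (m - i)) (LinearMap.ker (V ^ i)))
    (hD : ∀ q, ∀ x ∈ A q, D x ∈ B q) (hDU : D ∘ₗ U = V ∘ₗ D) (hnm : n < m)
    {a : ℤ} (hlow : ∀ q < a, A q ≤ LinearMap.ker D) (q : ℤ) :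
    A q ≤ LinearMap.ker D := by
  induction q using a.strongRec with
  | lt q hq => exact hlow q hq
  | ge q _ ih =>
    rcases le_or_gt q n with hq | hq
    · exact le_ker_of_le_ker_sub_two hU hsurj hinj hD hDU hnm hq (ih _ (by lia))
    · obtain ⟨i, rfl⟩ : ∃ i : ℕ, q = n + i := ⟨(q - n).toNat, by lia⟩
      intro _ hx
      obtain ⟨y, hy, rfl⟩ := hsurj i hx
      have hDy : D y = 0 := ih (n - i) (by lia) hy
      rw [LinearMap.mem_ker, map_pow_apply_of_comm hDU, hDy, map_zero]

end InternalGrading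

section DirectSum

open DirectSum

section TotalMap

variable {S ι κ : Type*} [Semiring S] [DecidableEq ι] [DecidableEq κ] {A : ι → Type*}
  {B : κ → Type*} [∀ i, AddCommMonoid (A i)] [∀ i, Module S (A i)] [∀ k, AddCommMonoid (B k)]
  [∀ k, Module S (B k)] (φ : ι → κ) (f : ∀ i, A i →ₗ[S] B (φ i))

/-- The map of total modules `⨁ i, A i → ⨁ k, B k` assembled from maps `A i → B (φ i)` shifting the
index by `φ`. In the total module an element and its transport `castHom` along an equality of
indices coincide, and `upow` becomes an honest power. -/
def totalMap : (⨁ i, A i) →ₗ[S] ⨁ k, B k :=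
  toModule S ι _ fun i => lof S κ B (φ i) ∘ₗ f i

theorem totalMap_lof (i : ι) (x : A i) :
    totalMap φ f (lof S ι A i x) = lof S κ B (φ i) (f i x) := by
  rw [totalMap, toModule_lof, LinearMap.comp_apply]

theorem totalMap_mem_range_lof (i : ι) :
    ∀ x ∈ LinearMap.range (lof S ι A i), totalMap φ f x ∈ LinearMap.range (lof S κ B (φ i)) := by
  rintro _ ⟨x, rfl⟩
  exact ⟨f i x, (totalMap_lof φ f i x).symm⟩

theorem range_lof_le_ker_totalMap_iff (i : ι) :
    LinearMap.range (lof S ι A i) ≤ LinearMap.ker (totalMap φ f) ↔ f i = 0 := by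
  rw [LinearMap.range_le_ker_iff, LinearMap.ext_iff, LinearMap.ext_iff]
  refine forall_congr' fun x => ?_
  rw [LinearMap.comp_apply, totalMap_lof, LinearMap.zero_apply, LinearMap.zero_apply]
  exact map_eq_zero_iff _ (of_injective (φ i))

end TotalMap

theorem lof_castHom (A : ℤ → Type*) [∀ j, AddCommGroup (A j)] [∀ j, Module R (A j)] {j j' : ℤ}
    (h : j = j') (x : A j) : lof R ℤ A j' (castHom (R := R) A h x) = lof R ℤ A j x := by
  subst h
  rfl

variable {E : ℤ → ℤ → Type*} [∀ p q, AddCommGroup (E p q)] [∀ p q, Module R (E p q)]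
  (u : ∀ p q, E p q →ₗ[R] E p (q + 2))

theorem totalMap_pow_lof (p : ℤ) (i : ℕ) (q : ℤ) (x : E p q) :
    (totalMap (· + 2) (u p) ^ i) (lof R ℤ (E p) q x) =
      lof R ℤ (E p) (q + 2 * i) (upow u p i q x) := by
  induction i generalizing q with
  | zero => rw [pow_zero, Module.End.one_apply, upow, lof_castHom]
  | succ i ih =>
    rw [pow_succ, Module.End.mul_apply, totalMap_lof, ih, upow, LinearMap.comp_apply,
      LinearMap.comp_apply, lof_castHom]

theorem totalMap_pow_lof_eq_lof_castHom (p : ℤ) (i : ℕ) {q q' : ℤ} (h : q + 2 * (i : ℤ) = q')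
    (x : E p q) :
    (totalMap (· + 2) (u p) ^ i) (lof R ℤ (E p) q x) =
      lof R ℤ (E p) q' ((castHom (E p) h ∘ₗ upow u p i q) x) := by
  rw [totalMap_pow_lof, LinearMap.comp_apply, lof_castHom]

theorem surjOn_totalMap_pow (p : ℤ) (i : ℕ) {q q' : ℤ} (h : q + 2 * (i : ℤ) = q')
    (hsurj : Function.Surjective (castHom (E p) h ∘ₗ upow u p i q)) :
    Set.SurjOn (totalMap (· + 2) (u p) ^ i) (LinearMap.range (lof R ℤ (E p) q))
      (LinearMap.range (lof R ℤ (E p) q')) := by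
  rintro _ ⟨x, rfl⟩
  obtain ⟨y, rfl⟩ := hsurj x
  exact ⟨_, ⟨y, rfl⟩, totalMap_pow_lof_eq_lof_castHom u p i h y⟩

theorem disjoint_ker_totalMap_pow (p : ℤ) (i : ℕ) {q q' : ℤ} (h : q + 2 * (i : ℤ) = q')
    (hinj : Function.Injective (castHom (E p) h ∘ₗ upow u p i q)) :
    Disjoint (LinearMap.range (lof R ℤ (E p) q))
      (LinearMap.ker (totalMap (· + 2) (u p) ^ i)) := by
  rw [Submodule.disjoint_def]
  rintro _ ⟨x, rfl⟩ hx
  rw [LinearMap.mem_ker, totalMap_pow_lof_eq_lof_castHom u p i h] at hx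
  have hux := (map_eq_zero_iff _ (of_injective q')).mp hx
  rw [(map_eq_zero_iff _ hinj).mp hux, map_zero]

theorem totalMap_comp_comm {p p' r : ℤ} (d : ∀ q, E p q →ₗ[R] E p' (q - r + 1))
    (hcomm : ∀ q : ℤ,
      castHom (E p') (show q - r + 1 + 2 = q + 2 - r + 1 by ring) ∘ₗ u p' (q - r + 1) ∘ₗ d q =
        d (q + 2) ∘ₗ u p q) :
    totalMap (· - r + 1) d ∘ₗ totalMap (· + 2) (u p) =
      totalMap (· + 2) (u p') ∘ₗ totalMap (· - r + 1) d := by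
  refine linearMap_ext R fun q => LinearMap.ext fun x => ?_
  have hx := LinearMap.congr_fun (hcomm q) x
  simp only [LinearMap.comp_apply] at hx
  simp only [LinearMap.comp_apply, totalMap_lof, ← hx, lof_castHom]

theorem differentials_vanish_general (n p p' : ℤ)
    (hsurj : ∀ i : ℕ, Function.Surjective
      (castHom (E p) (show n - (i : ℤ) + 2 * (i : ℕ) = n + i by ring) ∘ₗ upow u p i (n - i)))
    (hinj : ∀ i : ℕ, Function.Injective
      (castHom (E p') (show n - (i : ℤ) + 2 * (i : ℕ) = n + i by ring) ∘ₗ upow u p' i (n - i)))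
    (r : ℤ) (hr : 2 ≤ r) (d : ∀ q, E p q →ₗ[R] E p' (q - r + 1))
    (hcomm : ∀ q : ℤ,
      castHom (E p') (show q - r + 1 + 2 = q + 2 - r + 1 by ring) ∘ₗ u p' (q - r + 1) ∘ₗ d q =
        d (q + 2) ∘ₗ u p q)
    (a : ℤ) (hlow : ∀ q < a, d q = 0) (q : ℤ) :
    d q = 0 := by
  have hinj_reindexed (i : ℕ) :
      Disjoint (LinearMap.range (lof R ℤ (E p') (n + r - 1 - i - r + 1)))
        (LinearMap.ker (totalMap (· + 2) (u p') ^ i)) := by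
    have hdeg : n + r - 1 - (i : ℤ) - r + 1 = n - i := by ring
    rw [hdeg]
    exact disjoint_ker_totalMap_pow u p' i _ (hinj i)
  rw [← range_lof_le_ker_totalMap_iff (· - r + 1) d q]
  exact le_ker_of_lt_center (A := fun j => LinearMap.range (lof R ℤ (E p) j))
    (B := fun j => LinearMap.range (lof R ℤ (E p') (j - r + 1))) (n := n) (m := n + r - 1)
    (totalMap_mem_range_lof (· + 2) (u p))
    (fun i => surjOn_totalMap_pow u p i _ (hsurj i)) hinj_reindexed
    (totalMap_mem_range_lof (· - r + 1) d) (totalMap_comp_comm u d hcomm) (by linarith)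
    (fun j hj => (range_lof_le_ker_totalMap_iff (· - r + 1) d j).mpr (hlow j hj)) q

end DirectSum

theorem differentials_vanish
    {E : ℤ → ℤ → Type*} [∀ p q, AddCommGroup (E p q)] [∀ p q, Module R (E p q)]
    (a b : ℤ) (hbdd : ∀ p q : ℤ, q < a ∨ b < q → Subsingleton (E p q))
    (u : ∀ p q, E p q →ₗ[R] E p (q + 2)) (n : ℤ)
    (hiso : ∀ p : ℤ, ∀ i : ℕ, Function.Bijective ((castHom (E p)
      (show n - (i : ℤ) + 2 * (i : ℕ) = n + i by push_cast; ring)).comp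
        (upow u p i (n - i))))
    (r : ℤ) (hr : 2 ≤ r)
    (d : ∀ p q, E p q →ₗ[R] E (p + r) (q - r + 1))
    (hcomm : ∀ p q : ℤ,
      (castHom (E (p + r)) (show q - r + 1 + 2 = q + 2 - r + 1 by ring)).comp
          ((u (p + r) (q - r + 1)).comp (d p q)) =
        (d p (q + 2)).comp (u p q)) :
    ∀ p q : ℤ, d p q = 0 := fun p =>
  differentials_vanish_general u n p (p + r) (fun i => (hiso p i).2) (fun i => (hiso (p + r) i).1)
    r hr (d p) (hcomm p) a fun q hq => haveI := hbdd p q (.inl hq); Subsingleton.elim _ _
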